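/- arXiv:1501.07724 — 3 statements merged into one kernel-verified Lean document; each statement's English description precedes it below -/
import Mathlib

section
/- Let G be a compact Hausdorff topological group acting continuously on a topological space X, and let ⋆ ∈ X^G be a fixed point of the action. Then _{{⋆}}cat_G(X) ≤ TC^G(X). -/
open Set unitInterval

namespace PaperTC

variable {G X : Type*}

/-- The orbit of `x` under the action `act`. -/
def orbit (act : G → X → X) (x : X) : Set X := {y | ∃ g, act g x = y}

/-- The fixed point set of the action `act`. -/
def fixedSet (act : G → X → X) : Set X := {x | ∀ g, act g x = x}

/-- The fixed point set of a subset `S` of the acting group. -/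
def fixedSetOf (act : G → X → X) (S : Set G) : Set X := {x | ∀ g ∈ S, act g x = x}

/-- `minCover P` is the least `k ≥ 1` satisfying `P k`, as an element of `ℕ∞`
(equal to `∞` if there is no such `k`). -/
noncomputable def minCover (P : ℕ → Prop) : ℕ∞ :=
  sInf {k : ℕ∞ | ∃ m : ℕ, k = m ∧ 1 ≤ m ∧ P m}

section Plain

variable (Y : Type*) [TopologicalSpace Y]

/-- `Y × Y` can be covered by `k` open sets each admitting a motion planner. -/
def TCcover (k : ℕ) : Prop :=
  ∃ U : Fin k → Set (Y × Y),
    (∀ i, IsOpen (U i)) ∧ (⋃ i, U i) = univ ∧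
    ∀ i, ∃ s : Y × Y → C(I, Y),
      ContinuousOn s (U i) ∧ ∀ p ∈ U i, s p 0 = p.1 ∧ s p 1 = p.2

/-- Topological complexity (non-reduced, possibly infinite). -/
noncomputable def TC : ℕ∞ := minCover (TCcover Y)

/-- `Y` can be covered by `k` open sets, each of which can be deformed within `Y`
to a point. -/
def catCover (k : ℕ) : Prop :=
  ∃ U : Fin k → Set Y,
    (∀ i, IsOpen (U i)) ∧ (⋃ i, U i) = univ ∧
    ∀ i, ∃ H : Y × I → Y,
      ContinuousOn H (U i ×ˢ (univ : Set I)) ∧ (∀ x ∈ U i, H (x, 0) = x) ∧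
      ∃ y₀, ∀ x ∈ U i, H (x, 1) = y₀

/-- Non-reduced Lusternik–Schnirelmann category. -/
noncomputable def cat : ℕ∞ := minCover (catCover Y)

end Plain

section Equivariant

variable [TopologicalSpace X] (act : G → X → X)

/-- `X × X` can be covered by `k` invariant open sets each admitting an
equivariant motion planner. -/
def eqTCcover (k : ℕ) : Prop :=
  ∃ U : Fin k → Set (X × X),
    (∀ i, IsOpen (U i)) ∧ (⋃ i, U i) = univ ∧
    ∀ i, (∀ g p, p ∈ U i → (act g p.1, act g p.2) ∈ U i) ∧
      ∃ s : X × X → C(I, X),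
        ContinuousOn s (U i) ∧
        (∀ p ∈ U i, s p 0 = p.1 ∧ s p 1 = p.2) ∧
        (∀ g p, p ∈ U i → ∀ t : I, s (act g p.1, act g p.2) t = act g (s p t))

/-- Equivariant topological complexity `TC_G` of Colman and Grant. -/
noncomputable def eqTC : ℕ∞ := minCover (eqTCcover act)

/-- `X × X` can be covered by `k` `(G × G)`-invariant open sets, each admitting a
`(G × G)`-equivariant section of `π^G : P X ×_{X/G} P X → X × X`; such a section is
recorded by a pair of paths `s₁ p`, `s₂ p`, with the orbit of the endpoint of the first
equal to the orbit of the starting point of the second. -/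
def invTCcover (k : ℕ) : Prop :=
  ∃ U : Fin k → Set (X × X),
    (∀ i, IsOpen (U i)) ∧ (⋃ i, U i) = univ ∧
    ∀ i, (∀ g₁ g₂ : G, ∀ p, p ∈ U i → (act g₁ p.1, act g₂ p.2) ∈ U i) ∧
      ∃ s₁ s₂ : X × X → C(I, X),
        ContinuousOn s₁ (U i) ∧ ContinuousOn s₂ (U i) ∧
        (∀ p ∈ U i, s₁ p 0 = p.1 ∧ s₂ p 1 = p.2 ∧
          orbit act (s₁ p 1) = orbit act (s₂ p 0)) ∧
        (∀ g₁ g₂ : G, ∀ p, p ∈ U i → ∀ t : I,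
          s₁ (act g₁ p.1, act g₂ p.2) t = act g₁ (s₁ p t) ∧
          s₂ (act g₁ p.1, act g₂ p.2) t = act g₂ (s₂ p t))

/-- Invariant topological complexity `TC^G` of Lubawski and Marzantowicz. -/
noncomputable def invTC : ℕ∞ := minCover (invTCcover act)

/-- The invariant open set `U` is `G`-compressible into `A`: the inclusion `U ↪ X` is
`G`-equivariantly homotopic to a `G`-map with values in `A`. -/
def GCompressible (A : Set X) (U : Set X) : Prop :=
  (∀ g x, x ∈ U → act g x ∈ U) ∧
  ∃ H : X × I → X,
    ContinuousOn H (U ×ˢ (univ : Set I)) ∧ (∀ x ∈ U, H (x, 0) = x) ∧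
    (∀ g x, x ∈ U → ∀ t : I, H (act g x, t) = act g (H (x, t))) ∧
    (∀ x ∈ U, H (x, 1) ∈ A)

/-- A `G`-categorical set: compressible into a single orbit. -/
def GCategorical (U : Set X) : Prop :=
  ∃ x₀ : X, GCompressible act (orbit act x₀) U

/-- `X` can be covered by `k` open `G`-categorical sets. -/
def catGCover (k : ℕ) : Prop :=
  ∃ U : Fin k → Set X,
    (∀ i, IsOpen (U i)) ∧ (⋃ i, U i) = univ ∧ ∀ i, GCategorical act (U i)

/-- Equivariant Lusternik–Schnirelmann category `cat_G`. -/
noncomputable def catG : ℕ∞ := minCover (catGCover act)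

/-- `X` can be covered by `k` open sets `G`-compressible into `{star}`. -/
def pointedCatGCover (star : X) (k : ℕ) : Prop :=
  ∃ U : Fin k → Set X,
    (∀ i, IsOpen (U i)) ∧ (⋃ i, U i) = univ ∧
    ∀ i, GCompressible act {star} (U i)

/-- The pointed equivariant category `_{{⋆}}cat_G(X)`. -/
noncomputable def pointedCatG (star : X) : ℕ∞ := minCover (pointedCatGCover act star)

/-- `X` is `G`-contractible: the identity is `G`-homotopic to a map with values in a
single orbit. -/
def GContractible : Prop :=
  ∃ H : X × I → X,
    Continuous H ∧ (∀ x, H (x, 0) = x) ∧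
    (∀ g x, ∀ t : I, H (act g x, t) = act g (H (x, t))) ∧
    ∃ x₀ : X, ∀ x, H (x, 1) ∈ orbit act x₀

end Equivariant

/-- The orbit space `X/G` with the quotient topology. -/
abbrev OrbitSpace (act : G → X → X) : Type _ := Quot (fun x y => ∃ g, act g x = y)

end PaperTC

open PaperTC

/-!
Restrict a `(G × G)`-equivariant section `(s₁, s₂)` over `U ⊆ X × X` to the slice
`{x | (x, ⋆) ∈ U}`. Since `⋆` is fixed, the second factor of `G × G` shows that the path
`s₂ (x, ⋆)` lies in `X^G`. Hence the orbit of `s₂ (x, ⋆) 0` is a single point, so the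
condition that `s₁ (x, ⋆) 1` and `s₂ (x, ⋆) 0` have the same orbit says that they are equal.
The two paths therefore concatenate to an equivariant deformation of the slice onto `⋆`.
-/

namespace PaperTC

variable {G X : Type*}

theorem minCover_anti {P Q : ℕ → Prop} (h : ∀ k, P k → Q k) : minCover Q ≤ minCover P :=
  sInf_le_sInf fun _ ⟨m, hkm, hm, hP⟩ => ⟨m, hkm, hm, h m hP⟩

theorem eq_of_orbit_eq_of_mem_fixedSet [One G] {act : G → X → X} (act_one : ∀ x, act 1 x = x)
    {x y : X} (hxy : orbit act x = orbit act y) (hy : y ∈ fixedSet act) : x = y := by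
  have hx : x ∈ orbit act y := hxy ▸ ⟨1, act_one x⟩
  obtain ⟨g, hg⟩ := hx
  exact hg.symm.trans (hy g)

theorem homotopicWith_of_continuous_paths {Y Z : Type*} [TopologicalSpace Y] [TopologicalSpace Z]
    {P : C(Y, Z) → Prop} {f₀ f₁ : C(Y, Z)} {γ : Y → C(I, Z)} (hγ : Continuous γ)
    (h₀ : ∀ y, γ y 0 = f₀ y) (h₁ : ∀ y, γ y 1 = f₁ y)
    (hP : ∀ t, P ⟨fun y => γ y t, hγ.eval_const t⟩) : f₀.HomotopicWith f₁ P :=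
  ⟨{ toFun := fun q => γ q.2 q.1
     continuous_toFun := (hγ.comp continuous_snd).eval continuous_fst
     map_zero_left := h₀
     map_one_left := h₁
     prop' := hP }⟩

section Equivariant

variable [TopologicalSpace X] {act : G → X → X}

/-- Equivariance of a map defined on a subset `U` of `X`. The points `x` and `act g x` are both
required to lie in `U`, so that `U` itself need not be invariant. -/
def IsEquivariantOn (act : G → X → X) {U : Set X} (f : C(U, X)) : Prop :=
  ∀ (g : G) (x : U) (hgx : act g x ∈ U), f ⟨act g x, hgx⟩ = act g (f x)

theorem GCompressible.of_homotopicWith {A U : Set X} (hU : ∀ g x, x ∈ U → act g x ∈ U)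
    {f : C(U, X)} (hfA : ∀ x, f x ∈ A)
    (hf : ((ContinuousMap.id X).restrict U).HomotopicWith f (IsEquivariantOn act)) :
    GCompressible act A U := by
  classical
  obtain ⟨F⟩ := hf
  let H : X × I → X := fun q => if hq : q.1 ∈ U then F (q.2, ⟨q.1, hq⟩) else q.1
  have H_apply {x : X} (hx : x ∈ U) (t : I) : H (x, t) = F (t, ⟨x, hx⟩) := dif_pos hx
  refine ⟨hU, H, ?_, fun x hx => ?_, fun g x hx t => ?_, fun x hx => ?_⟩
  · have hF : Continuous fun q : ↥(U ×ˢ (univ : Set I)) => F (q.1.2, ⟨q.1.1, q.2.1⟩) := by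
      fun_prop
    exact continuousOn_iff_continuous_domRestrict.mpr
      (hF.congr fun q => (H_apply q.2.1 q.1.2).symm)
  · rw [H_apply hx, F.apply_zero]
    rfl
  · rw [H_apply hx, H_apply (hU g x hx)]
    exact F.prop t g ⟨x, hx⟩ (hU g x hx)
  · rw [H_apply hx, F.apply_one]
    exact hfA _

/-- The pair `(s₁, s₂)` is a `(G × G)`-equivariant section of `π^G` over the
`(G × G)`-invariant set `U`, in the encoding of `invTCcover`. -/
structure IsInvariantSection (act : G → X → X) (U : Set (X × X)) (s₁ s₂ : X × X → C(I, X)) :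
    Prop where
  act_mem : ∀ g₁ g₂ : G, ∀ p ∈ U, (act g₁ p.1, act g₂ p.2) ∈ U
  continuousOn_fst : ContinuousOn s₁ U
  continuousOn_snd : ContinuousOn s₂ U
  fst_zero : ∀ p ∈ U, s₁ p 0 = p.1
  snd_one : ∀ p ∈ U, s₂ p 1 = p.2
  orbit_eq : ∀ p ∈ U, orbit act (s₁ p 1) = orbit act (s₂ p 0)
  fst_act : ∀ g₁ g₂ : G, ∀ p ∈ U, ∀ t, s₁ (act g₁ p.1, act g₂ p.2) t = act g₁ (s₁ p t)
  snd_act : ∀ g₁ g₂ : G, ∀ p ∈ U, ∀ t, s₂ (act g₁ p.1, act g₂ p.2) t = act g₂ (s₂ p t)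

theorem homotopicWith_slice {U : Set (X × X)} {s : X × X → C(I, X)} {y : X}
    (hs : ContinuousOn s U)
    (hact : ∀ g, ∀ p ∈ U, ∀ t, s (act g p.1, act g p.2) t = act g (s p t))
    (hy : y ∈ fixedSet act) {f₀ f₁ : C({x | (x, y) ∈ U}, X)}
    (h₀ : ∀ x : {x | (x, y) ∈ U}, s (x, y) 0 = f₀ x)
    (h₁ : ∀ x : {x | (x, y) ∈ U}, s (x, y) 1 = f₁ x) :
    f₀.HomotopicWith f₁ (IsEquivariantOn act) := by
  have hγ : Continuous fun x : {x | (x, y) ∈ U} => s (x, y) :=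
    hs.comp_continuous (by fun_prop) fun x => x.2
  refine homotopicWith_of_continuous_paths hγ h₀ h₁ fun t g x _ => ?_
  simpa only [hy g, ContinuousMap.coe_mk] using hact g (x, y) x.2 t

namespace IsInvariantSection

variable {U : Set (X × X)} {s₁ s₂ : X × X → C(I, X)}

theorem act_mem_slice (h : IsInvariantSection act U s₁ s₂) {y : X} (hy : y ∈ fixedSet act)
    (g : G) (x : X) (hx : (x, y) ∈ U) : (act g x, y) ∈ U := by
  simpa only [hy g] using h.act_mem g g (x, y) hx

variable [One G]

theorem snd_mem_fixedSet (h : IsInvariantSection act U s₁ s₂) (act_one : ∀ x, act 1 x = x)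
    {p : X × X} (hp : p ∈ U) (hp_fixed : p.2 ∈ fixedSet act) (t : I) :
    s₂ p t ∈ fixedSet act := by
  intro g
  calc act g (s₂ p t) = s₂ (act 1 p.1, act g p.2) t := (h.snd_act 1 g p hp t).symm
    _ = s₂ p t := by rw [act_one, hp_fixed g]

theorem fst_one_eq_snd_zero (h : IsInvariantSection act U s₁ s₂) (act_one : ∀ x, act 1 x = x)
    {p : X × X} (hp : p ∈ U) (hp_fixed : p.2 ∈ fixedSet act) : s₁ p 1 = s₂ p 0 :=
  eq_of_orbit_eq_of_mem_fixedSet act_one (h.orbit_eq p hp)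
    (h.snd_mem_fixedSet act_one hp hp_fixed 0)

theorem gCompressible_slice (h : IsInvariantSection act U s₁ s₂) (act_one : ∀ x, act 1 x = x)
    {y : X} (hy : y ∈ fixedSet act) : GCompressible act {y} {x | (x, y) ∈ U} := by
  have hs₂ : Continuous fun x : {x | (x, y) ∈ U} => s₂ (x, y) :=
    h.continuousOn_snd.comp_continuous (by fun_prop) fun x => x.2
  let midpoint : C({x | (x, y) ∈ U}, X) := ⟨fun x => s₂ (x, y) 0, hs₂.eval_const 0⟩
  have incl_midpoint : ((ContinuousMap.id X).restrict _).HomotopicWith midpoint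
      (IsEquivariantOn act) :=
    homotopicWith_slice h.continuousOn_fst (fun g => h.fst_act g g) hy
      (fun x => h.fst_zero _ x.2) (fun x => h.fst_one_eq_snd_zero act_one x.2 hy)
  have midpoint_const : midpoint.HomotopicWith (.const _ y) (IsEquivariantOn act) :=
    homotopicWith_slice h.continuousOn_snd (fun g => h.snd_act g g) hy
      (fun _ => rfl) (fun x => h.snd_one _ x.2)
  exact .of_homotopicWith (h.act_mem_slice hy) (fun _ => rfl) (incl_midpoint.trans midpoint_const)

end IsInvariantSection

theorem exists_isInvariantSection_of_invTCcover {k : ℕ} (h : invTCcover act k) :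
    ∃ U : Fin k → Set (X × X), (∀ i, IsOpen (U i)) ∧ (⋃ i, U i) = univ ∧
      ∀ i, ∃ s₁ s₂, IsInvariantSection act (U i) s₁ s₂ := by
  obtain ⟨U, U_open, U_cover, hU⟩ := h
  refine ⟨U, U_open, U_cover, fun i => ?_⟩
  obtain ⟨act_mem, s₁, s₂, hs₁, hs₂, endpoints, equivariant⟩ := hU i
  exact ⟨s₁, s₂, act_mem, hs₁, hs₂, fun p hp => (endpoints p hp).1,
    fun p hp => (endpoints p hp).2.1, fun p hp => (endpoints p hp).2.2,
    fun g₁ g₂ p hp t => (equivariant g₁ g₂ p hp t).1,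
    fun g₁ g₂ p hp t => (equivariant g₁ g₂ p hp t).2⟩

theorem pointedCatGCover_of_invTCcover [One G] (act_one : ∀ x, act 1 x = x) {y : X}
    (hy : y ∈ fixedSet act) {k : ℕ} (h : invTCcover act k) : pointedCatGCover act y k := by
  obtain ⟨U, U_open, U_cover, hU⟩ := exists_isInvariantSection_of_invTCcover h
  refine ⟨fun i => {x | (x, y) ∈ U i}, fun i => (U_open i).preimage (by fun_prop), ?_,
    fun i => ?_⟩
  · exact iUnion_eq_univ_iff.mpr fun x => iUnion_eq_univ_iff.mp U_cover (x, y)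
  · obtain ⟨s₁, s₂, hs⟩ := hU i
    exact hs.gCompressible_slice act_one hy

end Equivariant

end PaperTC

theorem pointedCatG_le_invTC_general {G X : Type*} [One G] [TopologicalSpace X]
    (act : G → X → X) (act_one : ∀ x, act 1 x = x) (star : X) (hstar : star ∈ fixedSet act) :
    pointedCatG act star ≤ invTC act :=
  minCover_anti fun _ => pointedCatGCover_of_invTCcover act_one hstar

/-- For a compact Hausdorff topological group `G` acting continuously on a
space `X` with a fixed point `⋆`, the pointed equivariant category `_{{⋆}}cat_G(X)` is a
lower bound for the invariant topological complexity `TC^G(X)`. -/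
theorem pointedCatG_le_invTC {G X : Type*} [Group G] [TopologicalSpace G]
    [IsTopologicalGroup G] [CompactSpace G] [T2Space G] [TopologicalSpace X]
    (act : G → X → X)
    (act_one : ∀ x, act 1 x = x)
    (act_mul : ∀ g h x, act (g * h) x = act g (act h x))
    (act_cont : Continuous fun p : G × X => act p.1 p.2)
    (star : X) (hstar : star ∈ fixedSet act) :
    pointedCatG act star ≤ invTC act :=
  pointedCatG_le_invTC_general act act_one star hstar
end

section
/- Let G be a topological group acting continuously on a topological space X. If X is G-contractible (i.e. there is a G-equivariant homotopy from the identity of X to a G-equivariant map with values in a single orbit), then TC^G(X) = 1. No assumption that X^G is non-empty (nor that X is connected) is needed. -/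
open Set unitInterval

open PaperTC

/-!
A contraction `H` onto an orbit is itself a motion planner on all of `X × X`: follow `t ↦ H (x, t)`
from `x`, and run `t ↦ H (y, t)` backwards to `y`. The paths need not meet, because `π^G` only
asks that their inner endpoints lie in a common orbit, and both lie in the one onto which `H`
contracts. Each path depends on only one of `x` and `y`, so equivariance of `H` under `G` gives
equivariance of the planner under `G × G`.
-/

namespace PaperTC

variable {G X : Type*}

theorem minCover_eq_one {P : ℕ → Prop} (hP : P 1) : minCover P = 1 := by
  refine le_antisymm (sInf_le ⟨1, Nat.cast_one.symm, le_rfl, hP⟩) (le_sInf ?_)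
  rintro _ ⟨m, rfl, one_le_m, -⟩
  exact_mod_cast one_le_m

theorem orbit_eq_orbit_iff [Group G] [MulAction G X] {x y : X} :
    orbit (· • · : G → X → X) x = orbit (· • · : G → X → X) y ↔
      x ∈ orbit (· • · : G → X → X) y :=
  MulAction.orbit_eq_iff

section Planner

variable [TopologicalSpace X] {act : G → X → X}

theorem invTCcover_one_of_section (s₁ s₂ : C(X × X, C(I, X)))
    (source : ∀ p, s₁ p 0 = p.1) (target : ∀ p, s₂ p 1 = p.2)
    (orbit_eq : ∀ p, orbit act (s₁ p 1) = orbit act (s₂ p 0))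
    (equivariant₁ : ∀ g₁ g₂ p t, s₁ (act g₁ p.1, act g₂ p.2) t = act g₁ (s₁ p t))
    (equivariant₂ : ∀ g₁ g₂ p t, s₂ (act g₁ p.1, act g₂ p.2) t = act g₂ (s₂ p t)) :
    invTCcover act 1 :=
  ⟨fun _ => univ, fun _ => isOpen_univ, iUnion_const univ, fun _ =>
    ⟨fun _ _ _ _ => mem_univ _, s₁, s₂, s₁.continuous.continuousOn, s₂.continuous.continuousOn,
      fun p _ => ⟨source p, target p, orbit_eq p⟩,
      fun g₁ g₂ p _ t => ⟨equivariant₁ g₁ g₂ p t, equivariant₂ g₁ g₂ p t⟩⟩⟩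

theorem invTCcover_one_of_homotopy (H : C(X × I, X)) (H_zero : ∀ x, H (x, 0) = x)
    (H_equivariant : ∀ g x t, H (act g x, t) = act g (H (x, t)))
    (orbit_eq : ∀ x y, orbit act (H (x, 1)) = orbit act (H (y, 1))) :
    invTCcover act 1 := by
  let track : C(X, C(I, X)) := H.curry
  let reversedTrack : C(X, C(I, X)) :=
    (ContinuousMap.compRightContinuousMap X ⟨σ, continuous_symm⟩).comp track
  have reversedTrack_apply (x : X) (t : I) : reversedTrack x t = H (x, σ t) := rfl
  have reversedTrack_zero (x : X) : reversedTrack x 0 = H (x, 1) := by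
    rw [reversedTrack_apply, symm_zero]
  have reversedTrack_one (x : X) : reversedTrack x 1 = x := by
    rw [reversedTrack_apply, symm_one, H_zero]
  exact invTCcover_one_of_section (track.comp .fst) (reversedTrack.comp .snd)
    (source := fun p => H_zero p.1)
    (target := fun p => reversedTrack_one p.2)
    (orbit_eq := fun p => (orbit_eq p.1 p.2).trans
      (congrArg (orbit act) (reversedTrack_zero p.2).symm))
    (equivariant₁ := fun g₁ _ p t => H_equivariant g₁ p.1 t)
    (equivariant₂ := fun _ g₂ p t => H_equivariant g₂ p.2 (σ t))

end Planner

end PaperTC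

theorem invTC_eq_one_of_GContractible_general {G X : Type*} [Group G] [MulAction G X]
    [TopologicalSpace X] (hc : GContractible (· • · : G → X → X)) :
    invTC (· • · : G → X → X) = 1 := by
  obtain ⟨H, H_continuous, H_zero, H_equivariant, x₀, H_one_mem⟩ := hc
  have orbit_end (x : X) : orbit (· • · : G → X → X) (H (x, 1)) =
      orbit (· • · : G → X → X) x₀ :=
    orbit_eq_orbit_iff.mpr (H_one_mem x)
  exact minCover_eq_one <| invTCcover_one_of_homotopy ⟨H, H_continuous⟩ H_zero H_equivariant
    fun x y => (orbit_end x).trans (orbit_end y).symm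

/-- If a topological group `G` acts continuously on a space `X` and `X` is
`G`-contractible, then `TC^G(X) = 1`; no assumption on `X^G` (nor connectedness of `X`)
is needed. -/
theorem invTC_eq_one_of_GContractible {G X : Type*} [Group G] [TopologicalSpace G]
    [IsTopologicalGroup G] [TopologicalSpace X]
    (act : G → X → X)
    (act_one : ∀ x, act 1 x = x)
    (act_mul : ∀ g h x, act (g * h) x = act g (act h x))
    (act_cont : Continuous fun p : G × X => act p.1 p.2)
    (hc : GContractible act) :
    invTC act = 1 := by
  let _ : MulAction G X := { smul := act, one_smul := act_one, mul_smul := act_mul }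
  exact invTC_eq_one_of_GContractible_general hc
end

section
/- Let G be a finite group acting linearly on the sphere S^n (n ≥ 1), i.e. via an orthogonal representation ρ : G → O(n+1) restricted to the unit sphere S^n ⊆ ℝ^{n+1}, and suppose (S^n)^G ≠ ∅. Then cat_G(S^n) = 2. -/
open Set unitInterval

namespace PaperTC

/-- The unit sphere `S^n ⊆ ℝ^{n+1}` (with the Euclidean metric). -/
abbrev Sph (n : ℕ) : Set (EuclideanSpace ℝ (Fin (n + 1))) := Metric.sphere 0 1

/-- The action of `G` on the unit sphere `S^n` obtained by restricting an orthogonal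
representation of `G` on `ℝ^{n+1}`. -/
noncomputable def sphereAct {G : Type*} [Monoid G] {n : ℕ}
    (ρ : G →* (EuclideanSpace ℝ (Fin (n + 1)) ≃ₗᵢ[ℝ] EuclideanSpace ℝ (Fin (n + 1)))) :
    G → ↥(Sph n) → ↥(Sph n) := fun g x =>
  ⟨ρ g x, mem_sphere_zero_iff_norm.mpr (by
    rw [(ρ g).norm_map]; exact mem_sphere_zero_iff_norm.mp x.2)⟩

end PaperTC

open PaperTC

/-!
For a fixed point `q`, the complements of `-q` and of `q` contract equivariantly onto `q` and `-q`:
push the straight-line homotopy back to the sphere radially. Conversely, a homotopy from the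
identity into a single orbit moves `q` through fixed points only, so that orbit contains a fixed
point, hence is a point, and the sphere would be contractible.

That the sphere is not contractible follows from the no-retraction theorem, by the volume argument
of Milnor and Rogers. Let `u` be `C¹` and zero on the boundary of a convex body. For small `t` the
map `x ↦ x + t • u x` is a bijection of the body, so the integral of `det (1 + t • Du)` is its
volume. The integral is a polynomial in `t`, so it is the volume for `t = 1` too. But for
`u = f - id` with `f` a `C¹` retraction onto the sphere, `1 + Du = Df` is singular everywhere.
-/

open MeasureTheory Metric Polynomial Topology
open scoped NNReal

section Perturbation

theorem inter_frontier_nonempty_of_isPreconnected {X : Type*} [TopologicalSpace X] {s t : Set X}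
    (ht : IsPreconnected t) (hts : (t ∩ s).Nonempty) (htsc : (t ∩ sᶜ).Nonempty) :
    (t ∩ frontier s).Nonempty := by
  obtain ⟨x, hxt, hxs⟩ := hts
  obtain ⟨y, hyt, hys⟩ := htsc
  have := Subtype.preconnectedSpace ht
  have hfr : (frontier (Subtype.val ⁻¹' s : Set t)).Nonempty := nonempty_frontier_iff.2
    ⟨⟨⟨x, hxt⟩, hxs⟩, fun huniv => hys (huniv.ge (mem_univ ⟨y, hyt⟩))⟩
  obtain ⟨z, hz⟩ := hfr
  exact ⟨z, z.2, continuous_subtype_val.frontier_preimage_subset s hz⟩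

theorem image_eq_self_of_eqOn_compl {α : Type*} {φ : α → α} {s : Set α}
    (hφ : Function.Bijective φ) (hs : EqOn φ id sᶜ) : φ '' s = s := by
  rw [← compl_inj_iff, ← image_compl_eq hφ, hs.image_eq, image_id]

theorem bijective_add_of_lipschitzWith {E : Type*} [NormedAddCommGroup E] [CompleteSpace E]
    {K : ℝ≥0} {h : E → E} (hK : K < 1) (hh : LipschitzWith K h) :
    Function.Bijective fun x => x + h x := by
  have hcontr (y : E) : ContractingWith K fun x => y - h x :=
    ⟨hK, LipschitzWith.of_dist_le_mul fun a b => by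
      simpa only [dist_sub_left] using hh.dist_le_mul a b⟩
  have hfixed (x y : E) : Function.IsFixedPt (fun x => y - h x) x ↔ x + h x = y :=
    sub_eq_iff_eq_add.trans eq_comm
  refine ⟨fun a b hab => ?_, fun y => ⟨_, (hfixed _ y).1 (hcontr y).fixedPoint_isFixedPt⟩⟩
  exact (hcontr (b + h b)).fixedPoint_unique' ((hfixed a _).2 hab) ((hfixed b _).2 rfl)

theorem lipschitzWith_indicator_of_eqOn_frontier {E F : Type*} [NormedAddCommGroup E]
    [NormedSpace ℝ E] [PseudoMetricSpace F] [Zero F] {K : ℝ≥0} {u : E → F} {s : Set E}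
    (hs : IsClosed s) (hu : LipschitzOnWith K u s) (hfr : EqOn u 0 (frontier s)) :
    LipschitzWith K (s.indicator u) := by
  have hcross {x y : E} (hx : x ∈ s) (hy : y ∉ s) : dist (u x) 0 ≤ K * dist x y := by
    obtain ⟨z, hz, hzs⟩ := inter_frontier_nonempty_of_isPreconnected
      (convex_segment (𝕜 := ℝ) x y).isPreconnected
      ⟨x, left_mem_segment ℝ x y, hx⟩ ⟨y, right_mem_segment ℝ x y, hy⟩
    have hxz : dist x z ≤ dist x y := by
      simpa only [dist_comm x] using mem_closedBall.1 (segment_subset_closedBall_left x y hz)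
    calc dist (u x) 0 = dist (u x) (u z) := by rw [hfr hzs, Pi.zero_apply]
      _ ≤ K * dist x z := hu.dist_le_mul x hx z (hs.frontier_subset hzs)
      _ ≤ K * dist x y := by gcongr
  refine LipschitzWith.of_dist_le_mul fun x y => ?_
  by_cases hx : x ∈ s <;> by_cases hy : y ∈ s
  · simpa only [indicator_of_mem hx, indicator_of_mem hy] using hu.dist_le_mul x hx y hy
  · simpa only [indicator_of_mem hx, indicator_of_notMem hy] using hcross hx hy
  · simpa only [indicator_of_notMem hx, indicator_of_mem hy, dist_comm] using hcross hy hx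
  · simpa only [indicator_of_notMem hx, indicator_of_notMem hy, dist_self] using by positivity

end Perturbation

section Determinant

theorem exists_polynomial_eval_eq_det_one_add_smul {R M : Type*} [CommRing R] [AddCommGroup M]
    [Module R M] [Module.Free R M] [Module.Finite R M] (A : M →ₗ[R] M) :
    ∃ p : R[X], p.natDegree ≤ Module.finrank R M ∧
      ∀ t, p.eval t = LinearMap.det (1 + t • A) := by
  classical
  rcases subsingleton_or_nontrivial R with _ | _
  · exact ⟨0, by simp, fun _ => Subsingleton.elim _ _⟩
  let b := Module.Free.chooseBasis R M
  let B := LinearMap.toMatrix b b A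
  refine ⟨((X : R[X]) • B.map C + (1 : Matrix _ _ R).map C).det, ?_, fun t => ?_⟩
  · rw [Module.finrank_eq_card_chooseBasisIndex]
    exact natDegree_det_X_add_C_le B 1
  · have hB : LinearMap.toMatrix b b (1 + t • A) = t • B + 1 := by
      rw [map_add, map_smul, LinearMap.toMatrix_one, add_comm]
    have heval : (evalRingHom t).mapMatrix ((X : R[X]) • B.map C + (1 : Matrix _ _ R).map C) =
        t • B + 1 := by
      ext i j
      simp only [RingHom.mapMatrix_apply, Matrix.map_apply, Matrix.add_apply, Matrix.smul_apply,
        smul_eq_mul, map_add, coe_evalRingHom, eval_mul, eval_X, eval_C]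
    rw [← LinearMap.det_toMatrix b, hB, ← heval, ← RingHom.map_det, coe_evalRingHom]

theorem exists_polynomial_eval_eq_integral {α 𝕜 : Type*} [MeasurableSpace α] [RCLike 𝕜]
    {μ : Measure α} {p : α → 𝕜[X]} {d : ℕ} (hdeg : ∀ x, (p x).natDegree ≤ d)
    (hint : ∀ t, Integrable (fun x => (p x).eval t) μ) :
    ∃ q : 𝕜[X], ∀ t, q.eval t = ∫ x, (p x).eval t ∂μ := by
  let s := Finset.range (d + 1)
  let node : ℕ → 𝕜 := Nat.cast
  have hp (x : α) : p x = Lagrange.interpolate s node fun i => (p x).eval (node i) :=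
    Lagrange.eq_interpolate Nat.cast_injective.injOn <| by
      rw [Finset.card_range]
      exact degree_le_natDegree.trans_lt (by exact_mod_cast Nat.lt_succ_of_le (hdeg x))
  refine ⟨Lagrange.interpolate s node fun i => ∫ x, (p x).eval (node i) ∂μ, fun t => ?_⟩
  calc
    _ = ∑ i ∈ s, (∫ x, (p x).eval (node i) ∂μ) * (Lagrange.basis s node i).eval t := by
      simp only [Lagrange.interpolate_apply, eval_finsetSum, eval_mul, eval_C]
    _ = ∫ x, ∑ i ∈ s, (p x).eval (node i) * (Lagrange.basis s node i).eval t ∂μ := by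
      rw [integral_finsetSum _ fun i _ => (hint (node i)).mul_const _]
      simp only [integral_mul_const]
    _ = ∫ x, (p x).eval t ∂μ := by
      refine integral_congr_ae (.of_forall fun x => ?_)
      conv_rhs => change eval t (p x); rw [hp x]
      simp only [Lagrange.interpolate_apply, eval_finsetSum, eval_mul, eval_C]

theorem det_one_add_pos_of_norm_lt_one {E : Type*} [NormedAddCommGroup E] [NormedSpace ℝ E]
    [CompleteSpace E] {A : E →L[ℝ] E} (hA : ‖A‖ < 1) : 0 < (1 + A).det := by
  have hcont : Continuous fun t : ℝ => (1 + t • A).det :=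
    ContinuousLinearMap.continuous_det.comp (by fun_prop)
  have hne (t : ℝ) (ht : t ∈ Icc (0 : ℝ) 1) : (1 + t • A).det ≠ 0 := by
    have hlt : ‖-(t • A)‖ < 1 := by
      rw [norm_neg, norm_smul, Real.norm_of_nonneg ht.1]
      exact (mul_le_of_le_one_left (norm_nonneg A) ht.2).trans_lt hA
    have hunit : IsUnit (1 + t • A) := by simpa using isUnit_one_sub_of_norm_lt_one hlt
    exact (LinearMap.isUnit_det _ (hunit.map ContinuousLinearMap.toLinearMapRingHom)).ne_zero
  by_contra! hneg
  obtain ⟨t, ht, hzero⟩ := intermediate_value_Icc' zero_le_one hcont.continuousOn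
    (show (0 : ℝ) ∈ Icc _ _ from ⟨by simpa using hneg, by simp [ContinuousLinearMap.det]⟩)
  exact hne t ht hzero

end Determinant

section VolumePreservation

variable {E : Type*} [NormedAddCommGroup E] [NormedSpace ℝ E] [FiniteDimensional ℝ E]
  [MeasurableSpace E] [BorelSpace E] (μ : Measure E) [μ.IsAddHaarMeasure] {s : Set E} {u : E → E}

theorem setIntegral_det_one_add_fderiv_of_nnnorm_le {K : ℝ≥0} (hK : K < 1) (hconv : Convex ℝ s)
    (hs : IsClosed s) (hu : ∀ x ∈ s, DifferentiableAt ℝ u x)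
    (hbound : ∀ x ∈ s, ‖fderiv ℝ u x‖₊ ≤ K) (hfr : EqOn u 0 (frontier s)) :
    ∫ x in s, (1 + fderiv ℝ u x).det ∂μ = μ.real s := by
  let φ : E → E := fun x => x + s.indicator u x
  have hφ : Function.Bijective φ := bijective_add_of_lipschitzWith hK <|
    lipschitzWith_indicator_of_eqOn_frontier hs
      (hconv.lipschitzOnWith_of_nnnorm_fderiv_le hu hbound) hfr
  have himage : φ '' s = s := image_eq_self_of_eqOn_compl hφ fun x hx => by
    simp only [φ, indicator_of_notMem hx, add_zero, id]
  have hderiv (x : E) (hx : x ∈ s) : HasFDerivWithinAt φ (1 + fderiv ℝ u x) s x := by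
    have h : HasFDerivAt (fun y => y + u y) (1 + fderiv ℝ u x) x :=
      (hasFDerivAt_id x).add (hu x hx).hasFDerivAt
    refine h.hasFDerivWithinAt.congr (fun y hy => ?_) ?_ <;>
      simp only [φ, indicator_of_mem, *]
  have hdet (x : E) (hx : x ∈ s) : 0 < (1 + fderiv ℝ u x).det :=
    det_one_add_pos_of_norm_lt_one <| NNReal.coe_lt_one.2 <| (hbound x hx).trans_lt hK
  calc ∫ x in s, (1 + fderiv ℝ u x).det ∂μ
      = ∫ x in s, |(1 + fderiv ℝ u x).det| • (1 : ℝ) ∂μ :=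
        setIntegral_congr_fun hs.measurableSet fun x hx => by
          simp only [abs_of_pos (hdet x hx), smul_eq_mul, mul_one]
    _ = ∫ _ in φ '' s, (1 : ℝ) ∂μ := (integral_image_eq_integral_abs_det_fderiv_smul μ
        hs.measurableSet hderiv hφ.injective.injOn fun _ => 1).symm
    _ = μ.real s := by rw [himage, setIntegral_const, smul_eq_mul, mul_one]

theorem setIntegral_det_one_add_fderiv (hconv : Convex ℝ s) (hs : IsCompact s)
    (hu : ContDiff ℝ 1 u) (hfr : EqOn u 0 (frontier s)) :
    ∫ x in s, (1 + fderiv ℝ u x).det ∂μ = μ.real s := by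
  have hDu : Continuous (fderiv ℝ u) := hu.continuous_fderiv one_ne_zero
  have hdiff : Differentiable ℝ u := hu.differentiable one_ne_zero
  obtain ⟨B, hB⟩ : ∃ B : ℝ≥0, ∀ x ∈ s, ‖fderiv ℝ u x‖₊ ≤ B := by
    obtain ⟨b, hb⟩ := hs.exists_bound_of_continuousOn hDu.continuousOn
    exact ⟨b.toNNReal, fun x hx => NNReal.le_toNNReal_of_coe_le (hb x hx)⟩
  have hint (t : ℝ) : IntegrableOn (fun x => (1 + t • fderiv ℝ u x).det) s μ :=
    (ContinuousLinearMap.continuous_det.comp (by fun_prop)).continuousOn.integrableOn_compact hs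
  choose p hdeg hp using fun x =>
    exists_polynomial_eval_eq_det_one_add_smul (fderiv ℝ u x : E →ₗ[ℝ] E)
  replace hp (x : E) (t : ℝ) : (p x).eval t = (1 + t • fderiv ℝ u x).det := hp x t
  obtain ⟨q, hq⟩ := exists_polynomial_eval_eq_integral (μ := μ.restrict s) hdeg
    (by simpa only [hp, IntegrableOn] using hint)
  have hq' (t : ℝ) : q.eval t = ∫ x in s, (1 + t • fderiv ℝ u x).det ∂μ := by
    simp only [hq, hp]
  have hsmall (t : ℝ) (ht : t ∈ Ioo (0 : ℝ) (1 / (B + 1))) : q.eval t = μ.real s := by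
    have hK : t.toNNReal * B < 1 := by
      have h : t * (B + 1) < 1 := (lt_div_iff₀ (by positivity)).1 ht.2
      rw [← NNReal.coe_lt_one, NNReal.coe_mul, Real.coe_toNNReal t ht.1.le]
      linarith [ht.1]
    have hfderiv (x : E) : fderiv ℝ (t • u) x = t • fderiv ℝ u x :=
      fderiv_const_smul (hdiff x) t
    have hbound (x : E) (hx : x ∈ s) : ‖fderiv ℝ (t • u) x‖₊ ≤ t.toNNReal * B := by
      rw [hfderiv, nnnorm_smul, ← Real.toNNReal_eq_nnnorm_of_nonneg ht.1.le]
      gcongr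
      exact hB x hx
    simpa only [hq', hfderiv] using setIntegral_det_one_add_fderiv_of_nnnorm_le μ hK hconv
      hs.isClosed (fun x _ => (hdiff x).const_smul t) hbound
      fun x hx => by simp [hfr hx]
  have hconst : q = C (μ.real s) := eq_of_infinite_eval_eq _ _ <|
    (Ioo_infinite (show (0 : ℝ) < 1 / (B + 1) by positivity)).mono fun t ht => by
      simpa only [mem_ofPred_eq, eval_C] using hsmall t ht
  simpa only [hconst, eval_C, one_smul] using (hq' 1).symm

end VolumePreservation

section NoRetraction

variable {E : Type*} [NormedAddCommGroup E] [InnerProductSpace ℝ E]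

theorem det_fderiv_eq_zero_of_norm_eventually_const [FiniteDimensional ℝ E] {f : E → E} {x : E}
    {r : ℝ} (hr : r ≠ 0) (hf : DifferentiableAt ℝ f x) (hnorm : ∀ᶠ y in 𝓝 x, ‖f y‖ = r) :
    (fderiv ℝ f x).det = 0 := by
  have horth (v : E) : inner ℝ (f x) (fderiv ℝ f x v) = 0 := by
    have hconst : HasFDerivAt (fun y => ‖f y‖ ^ 2) (0 : E →L[ℝ] ℝ) x :=
      (hasFDerivAt_const (r ^ 2) x).congr_of_eventuallyEq (hnorm.mono fun y hy => by simp only [hy])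
    simpa using DFunLike.congr_fun (hf.hasFDerivAt.norm_sq.unique hconst) v
  by_contra hdet
  obtain ⟨v, hv⟩ := (LinearMap.equivOfDetNeZero (fderiv ℝ f x : E →ₗ[ℝ] E) hdet).surjective (f x)
  have hfx : f x = 0 := inner_self_eq_zero.1 <| by
    nth_rw 2 [← hv]
    exact horth v
  exact hr (by rw [← hnorm.self_of_nhds, hfx, norm_zero])

theorem not_exists_contDiff_retraction_sphere [FiniteDimensional ℝ E] :
    ¬ ∃ f : E → E, ContDiff ℝ 1 f ∧ (∀ x, f x ∈ sphere (0 : E) 1) ∧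
      EqOn f id (sphere (0 : E) 1) := by
  rintro ⟨f, hf, hmem, hid⟩
  borelize E
  let μ : Measure E := Measure.addHaar
  let u : E → E := f - id
  have hdiff : Differentiable ℝ f := hf.differentiable one_ne_zero
  have hdet (x : E) : (1 + fderiv ℝ u x).det = 0 := by
    have hfderiv : fderiv ℝ u x = fderiv ℝ f x - 1 := by
      rw [fderiv_sub (hdiff x) differentiableAt_id, fderiv_id, ContinuousLinearMap.one_def]
    rw [hfderiv, add_sub_cancel]
    exact det_fderiv_eq_zero_of_norm_eventually_const one_ne_zero (hdiff x)
      (.of_forall fun y => mem_sphere_zero_iff_norm.1 (hmem y))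
  have hvol : μ.real (closedBall (0 : E) 1) = 0 := by
    rw [← setIntegral_det_one_add_fderiv μ (convex_closedBall 0 1) (isCompact_closedBall 0 1)
      (hf.sub contDiff_id) fun x hx => sub_eq_zero.2 (hid (frontier_closedBall_subset_sphere hx))]
    exact (integral_congr_ae (.of_forall hdet)).trans (integral_zero _ _)
  exact (ENNReal.toReal_pos (measure_closedBall_pos μ 0 one_pos).ne'
    measure_closedBall_lt_top.ne).ne' hvol

theorem exists_contDiff_retraction_sphere_of_continuous [FiniteDimensional ℝ E]
    {r : E → E} (hr : Continuous r) (hmem : ∀ x, r x ∈ sphere (0 : E) 1)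
    (hid : EqOn r id (sphere (0 : E) 1)) :
    ∃ f : E → E, ContDiff ℝ 1 f ∧ (∀ x, f x ∈ sphere (0 : E) 1) ∧
      EqOn f id (sphere (0 : E) 1) := by
  let F : E → E := fun x => if ‖x‖ ≤ 1 then r x else x
  have hF : Continuous F := hr.if_le continuous_id continuous_norm continuous_const
    fun x hx => hid (mem_sphere_zero_iff_norm.2 hx)
  have hF_norm (x : E) : 1 ≤ ‖F x‖ := by
    by_cases hx : ‖x‖ ≤ 1
    · simp only [F, if_pos hx, mem_sphere_zero_iff_norm.1 (hmem x), le_refl]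
    · simpa only [F, if_neg hx] using (not_le.1 hx).le
  have hF_id : EqOn F id (sphere (0 : E) 1) := fun x hx => by
    simp only [F, if_pos (mem_sphere_zero_iff_norm.1 hx).le, hid hx]
  -- Approximating `F - id` rather than `F` keeps the sphere fixed: the support does not grow.
  obtain ⟨g, hg, hclose, hsupp⟩ := (hF.sub continuous_id).exists_contDiff_approx 1
    (ε := fun _ => 1) continuous_const fun _ => one_pos
  have hne (x : E) : x + g x ≠ 0 := fun hzero => by
    have hdist : ‖F x‖ = dist (g x) (F x - x) := by
      rw [eq_neg_of_add_eq_zero_right hzero, dist_eq_norm, neg_sub_left, sub_add_cancel, norm_neg]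
    exact (hF_norm x).not_gt (hdist.trans_lt (hclose x))
  have hsmooth : ContDiff ℝ 1 fun x => x + g x := contDiff_id.add hg
  refine ⟨fun x => NormedSpace.normalize (x + g x), ?_, fun x => ?_, fun x hx => ?_⟩
  · exact ((hsmooth.norm ℝ hne).inv fun x => norm_ne_zero_iff.2 (hne x)).smul hsmooth
  · exact mem_sphere_zero_iff_norm.2 (NormedSpace.norm_normalize (hne x))
  · have hgx : g x = 0 := Function.notMem_support.1 fun h =>
      hsupp h (sub_eq_zero.2 (hF_id hx))
    simp only [hgx, add_zero, id,
      NormedSpace.normalize_eq_self_of_norm_eq_one (mem_sphere_zero_iff_norm.1 hx)]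

end NoRetraction

section UnitSphere

variable {E : Type*} [NormedAddCommGroup E] [NormedSpace ℝ E]

open Classical in
/-- The radial projection of `x` onto the unit sphere, with the value `c` at the origin. -/
noncomputable def radialProjection (c : sphere (0 : E) 1) (x : E) : sphere (0 : E) 1 :=
  if hx : x = 0 then c
  else ⟨NormedSpace.normalize x, mem_sphere_zero_iff_norm.2 (NormedSpace.norm_normalize hx)⟩

theorem coe_radialProjection (c : sphere (0 : E) 1) {x : E} (hx : x ≠ 0) :
    (radialProjection c x : E) = NormedSpace.normalize x := by
  rw [radialProjection, dif_neg hx]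

theorem radialProjection_coe (c x : sphere (0 : E) 1) : radialProjection c (x : E) = x :=
  Subtype.ext <| by
    rw [coe_radialProjection c (ne_zero_of_mem_unit_sphere x),
      NormedSpace.normalize_eq_self_of_norm_eq_one (norm_eq_of_mem_sphere x)]

theorem continuousOn_radialProjection (c : sphere (0 : E) 1) :
    ContinuousOn (radialProjection c) {0}ᶜ := by
  rw [Topology.IsInducing.subtypeVal.continuousOn_iff]
  have h : ContinuousOn (fun x : E => ‖x‖⁻¹ • x) {0}ᶜ :=
    (continuousOn_id.norm.inv₀ fun x hx => norm_ne_zero_iff.2 hx).smul continuousOn_id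
  exact h.congr fun x hx => coe_radialProjection c hx

theorem exists_continuous_extension_of_nullhomotopic {Y : Type*} [TopologicalSpace Y]
    {f : C(sphere (0 : E) 1, Y)} (hf : f.Nullhomotopic) :
    ∃ F : C(E, Y), ∀ x : sphere (0 : E) 1, F x = f x := by
  obtain ⟨y, ⟨H⟩⟩ := hf
  rcases isEmpty_or_nonempty (sphere (0 : E) 1) with _ | ⟨⟨c⟩⟩
  · exact ⟨.const E y, isEmptyElim⟩
  let time (x : E) : unitInterval := projIcc 0 1 zero_le_one (2 * ‖x‖ - 1)
  let F (x : E) : Y := H.symm (time x, radialProjection c x)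
  have htime : Continuous time := continuous_projIcc.comp (by fun_prop)
  have hF : Continuous F := continuous_iff_continuousAt.2 fun x => by
    rcases eq_or_ne x 0 with rfl | hx
    · have hconst : F =ᶠ[𝓝 0] fun _ => y := by
        filter_upwards [ball_mem_nhds (0 : E) (show (0 : ℝ) < 1 / 2 by norm_num)] with z hz
        have hz' : 2 * ‖z‖ - 1 ≤ 0 := by linarith [mem_ball_zero_iff.1 hz]
        have htz : time z = 0 := projIcc_of_le_left _ hz'
        simp only [F, htz, ContinuousMap.Homotopy.apply_zero, ContinuousMap.const_apply]
      exact continuousAt_const.congr hconst.symm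
    · exact H.symm.continuous.continuousAt.comp <| htime.continuousAt.prodMk <|
        (continuousOn_radialProjection c).continuousAt (isOpen_compl_singleton.mem_nhds hx)
  refine ⟨⟨F, hF⟩, fun x => ?_⟩
  have htx : time x = 1 := projIcc_of_right_le _ (by rw [norm_eq_of_mem_sphere]; norm_num)
  simp only [ContinuousMap.coe_mk, F, htx, ContinuousMap.Homotopy.apply_one, radialProjection_coe]

theorem map_radialProjection (A : E →ₗᵢ[ℝ] E) {c : sphere (0 : E) 1} (hA : A c = c) (x : E) :
    A (radialProjection c x) = radialProjection c (A x) := by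
  rcases eq_or_ne x 0 with rfl | hx
  · simp only [radialProjection, map_zero, dite_true, hA]
  · have hAx : A x ≠ 0 := fun h => hx (A.injective (h.trans (map_zero A).symm))
    simp only [coe_radialProjection c hx, coe_radialProjection c hAx, NormedSpace.normalize,
      map_smul, A.norm_map]

theorem segment_ne_zero_of_ne_neg {x q : sphere (0 : E) 1} (hxq : x ≠ -q) (t : unitInterval) :
    (1 - t : ℝ) • (x : E) + (t : ℝ) • (q : E) ≠ 0 := fun hzero => by
  have hx : (1 - t : ℝ) • (x : E) = (t : ℝ) • -(q : E) := by
    rw [smul_neg]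
    exact eq_neg_of_add_eq_zero_left hzero
  have ht : (1 - t : ℝ) = t := by
    simpa only [norm_smul, norm_neg, norm_eq_of_mem_sphere, mul_one,
      Real.norm_of_nonneg t.2.1, Real.norm_of_nonneg (sub_nonneg.2 t.2.2)] using congrArg norm hx
  rw [ht] at hx
  exact hxq (Subtype.ext (smul_right_injective E (show (t : ℝ) ≠ 0 by linarith) hx))

end UnitSphere

theorem not_contractibleSpace_sphere {E : Type*} [NormedAddCommGroup E] [InnerProductSpace ℝ E]
    [FiniteDimensional ℝ E] : ¬ ContractibleSpace (sphere (0 : E) 1) := fun _ => by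
  obtain ⟨r, hr⟩ :=
    exists_continuous_extension_of_nullhomotopic (id_nullhomotopic (sphere (0 : E) 1))
  exact not_exists_contDiff_retraction_sphere (E := E) <|
    exists_contDiff_retraction_sphere_of_continuous (r := fun x => (r x : E))
      (continuous_subtype_val.comp r.continuous) (fun x => (r x).2)
      fun x hx => congrArg Subtype.val (hr ⟨x, hx⟩)

namespace PaperTC

section Category

variable {G X : Type*}

theorem minCover_eq_two {P : ℕ → Prop} (h1 : ¬ P 1) (h2 : P 2) : minCover P = 2 := by
  refine IsLeast.csInf_eq ⟨⟨2, rfl, one_le_two, h2⟩, ?_⟩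
  rintro _ ⟨m, rfl, hm, hP⟩
  have hm1 : m ≠ 1 := fun h => h1 (h ▸ hP)
  exact_mod_cast (show 2 ≤ m by omega)

theorem orbit_eq_singleton_of_mem_fixedSet {act : G → X → X} (hinj : ∀ g, (act g).Injective)
    {p x : X} (hp : p ∈ fixedSet act) (hpx : p ∈ orbit act x) : orbit act x = {p} := by
  obtain ⟨g, hg⟩ := hpx
  obtain rfl : x = p := hinj g (hg.trans (hp g).symm)
  refine Subset.antisymm ?_ (singleton_subset_iff.2 ⟨g, hg⟩)
  rintro _ ⟨g', rfl⟩
  exact hp g'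

variable [TopologicalSpace X] {act : G → X → X}

theorem catGCover_one_iff : catGCover act 1 ↔ GContractible act := by
  constructor
  · rintro ⟨U, -, hcover, hcat⟩
    obtain ⟨x₀, -, H, hH, hzero, heq, hone⟩ := hcat 0
    have hU : U 0 = univ := hcover ▸ (ciSup_unique (s := U)).symm
    simp only [hU, mem_univ, forall_const, univ_prod_univ, continuousOn_univ] at hH hzero heq hone
    exact ⟨H, hH, hzero, heq, x₀, hone⟩
  · rintro ⟨H, hH, hzero, heq, x₀, hone⟩
    exact ⟨fun _ => univ, fun _ => isOpen_univ, iUnion_const univ, fun _ =>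
      ⟨x₀, fun _ _ _ => mem_univ _, H, hH.continuousOn, fun x _ => hzero x,
        fun g x _ => heq g x, fun x _ => hone x⟩⟩

theorem catGCover_two_of_union_eq_univ {U V : Set X} (hU : IsOpen U) (hV : IsOpen V)
    (hUV : U ∪ V = univ) (hUcat : GCategorical act U) (hVcat : GCategorical act V) :
    catGCover act 2 := by
  refine ⟨![U, V], Fin.forall_fin_two.2 ⟨hU, hV⟩, ?_, Fin.forall_fin_two.2 ⟨hUcat, hVcat⟩⟩
  rw [← hUV]
  ext x
  simp only [mem_iUnion, Fin.exists_fin_two, Matrix.cons_val_zero, Matrix.cons_val_one, mem_union]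

theorem GContractible.contractibleSpace (hinj : ∀ g, (act g).Injective)
    (hfix : (fixedSet act).Nonempty) (h : GContractible act) : ContractibleSpace X := by
  obtain ⟨q, hq⟩ := hfix
  obtain ⟨H, hH, hzero, heq, x₀, hone⟩ := h
  have hfixed : H (q, 1) ∈ fixedSet act := fun g => by rw [← heq, hq g]
  have hconst (x : X) : H (x, 1) = H (q, 1) := by
    simpa only [orbit_eq_singleton_of_mem_fixedSet hinj hfixed (hone q), mem_singleton_iff]
      using hone x
  rw [contractible_iff_id_nullhomotopic]
  exact ⟨H (q, 1), ⟨{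
    toFun := fun p => H (p.2, p.1)
    continuous_toFun := hH.comp continuous_swap
    map_zero_left := hzero
    map_one_left := hconst }⟩⟩

end Category

section LinearSphere

variable {G E : Type*} [Monoid G] [NormedAddCommGroup E] [NormedSpace ℝ E]

/-- The action of `G` on the unit sphere of `E` restricting a representation of `G` by linear
isometries; for `E = ℝⁿ⁺¹` it is `sphereAct`. -/
def linearSphereAct (ρ : G →* (E ≃ₗᵢ[ℝ] E)) :
    G → sphere (0 : E) 1 → sphere (0 : E) 1 := fun g x =>
  ⟨ρ g x, by rw [mem_sphere_zero_iff_norm, (ρ g).norm_map, norm_eq_of_mem_sphere]⟩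

theorem linearSphereAct_injective (ρ : G →* (E ≃ₗᵢ[ℝ] E)) (g : G) :
    (linearSphereAct ρ g).Injective := fun _ _ h =>
  Subtype.ext ((ρ g).injective (congrArg Subtype.val h))

theorem neg_mem_fixedSet_linearSphereAct {ρ : G →* (E ≃ₗᵢ[ℝ] E)}
    {q : sphere (0 : E) 1} (hq : q ∈ fixedSet (linearSphereAct ρ)) :
    -q ∈ fixedSet (linearSphereAct ρ) := fun g =>
  Subtype.ext ((map_neg (ρ g) (q : E)).trans (congrArg Neg.neg (congrArg Subtype.val (hq g))))

theorem gCategorical_compl_singleton_neg {ρ : G →* (E ≃ₗᵢ[ℝ] E)}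
    {q : sphere (0 : E) 1} (hq : q ∈ fixedSet (linearSphereAct ρ)) :
    GCategorical (linearSphereAct ρ) {-q}ᶜ := by
  have hρq (g : G) : ρ g q = q := congrArg Subtype.val (hq g)
  have hcont : Continuous fun p : sphere (0 : E) 1 × I =>
      (1 - p.2 : ℝ) • (p.1 : E) + (p.2 : ℝ) • (q : E) := by fun_prop
  refine ⟨q, fun g x hx hgx => hx ?_,
    fun p => radialProjection q ((1 - p.2 : ℝ) • (p.1 : E) + (p.2 : ℝ) • (q : E)),
    ?_, fun x _ => ?_, fun g x _ t => Subtype.ext ?_, fun x _ => ⟨1, ?_⟩⟩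
  · exact linearSphereAct_injective ρ g (hgx.trans (neg_mem_fixedSet_linearSphereAct hq g).symm)
  · exact (continuousOn_radialProjection q).comp hcont.continuousOn
      fun p hp => segment_ne_zero_of_ne_neg hp.1 p.2
  · simp only [Icc.coe_zero, sub_zero, one_smul, zero_smul, add_zero, radialProjection_coe]
  · refine Eq.trans ?_ (map_radialProjection (ρ g).toLinearIsometry (hρq g) _).symm
    simp [linearSphereAct, hρq]
  · simp only [Icc.coe_one, sub_self, zero_smul, one_smul, zero_add, radialProjection_coe, hq 1]

end LinearSphere

end PaperTC

theorem catG_linear_sphere_eq_two_general {G E : Type*} [Monoid G] [NormedAddCommGroup E]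
    [InnerProductSpace ℝ E] [FiniteDimensional ℝ E] (ρ : G →* (E ≃ₗᵢ[ℝ] E))
    (hfix : (fixedSet (linearSphereAct ρ)).Nonempty) :
    catG (linearSphereAct ρ) = 2 := by
  refine minCover_eq_two (fun hone => ?_) ?_
  · exact not_contractibleSpace_sphere <|
      (catGCover_one_iff.1 hone).contractibleSpace (linearSphereAct_injective ρ) hfix
  · obtain ⟨q, hq⟩ := hfix
    refine catGCover_two_of_union_eq_univ isOpen_compl_singleton isOpen_compl_singleton ?_
      (gCategorical_compl_singleton_neg hq)
      (gCategorical_compl_singleton_neg (neg_mem_fixedSet_linearSphereAct hq))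
    rw [← compl_inter, compl_univ_iff, singleton_inter_eq_empty, mem_singleton_iff, neg_neg]
    exact (ne_neg_of_mem_unit_sphere ℝ q).symm

/-- If a finite group `G` acts linearly on `S^n` (via an orthogonal
representation) with non-empty fixed point set, then `cat_G(S^n) = 2`. -/
theorem catG_linear_sphere_eq_two {G : Type*} [Group G] [Finite G] (n : ℕ) (hn : 1 ≤ n)
    (ρ : G →* (EuclideanSpace ℝ (Fin (n + 1)) ≃ₗᵢ[ℝ] EuclideanSpace ℝ (Fin (n + 1))))
    (hfix : (fixedSet (sphereAct ρ)).Nonempty) :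
    catG (sphereAct ρ) = 2 :=
  catG_linear_sphere_eq_two_general ρ hfix
end
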